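/- arXiv:2102.06853 — 2 statements merged into one kernel-verified Lean document; each statement's English description precedes it below -/
import Mathlib

section
/- In the ring of symmetric functions $\Lambda$ with power sums $p_n$ and the adjoint operators $p_n^\perp = n\,\partial/\partial p_n$, the vertex operator coefficients $Q_m^* = [w^m]\exp(\sum_{n\geq 1}\frac{1-q^n}{n}p_n^\perp w^n)$ and $Q_n = [z^n]\exp(\sum_{k\geq 1}\frac{1-t^k}{k}p_k z^k)$ satisfy the commutation relation $[Q_m^*, Q_n] = (1-q)(1-t)\sum_{i=1}^{\min(m,n)}\sum_{j=0}^{\min(m,n)-i}(qt)^j\, Q_{n-i-j}\,Q^*_{m-i-j}$. -/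
open MvPolynomial

variable {F : Type*} [Field F] [CharZero F]

/-- Coefficients `Q_n` of `Q(z) = exp(∑_{k≥1} (1-t^k)/k · p_k z^k)` in the ring of
symmetric functions (modelled as `MvPolynomial ℕ+ F`, the variable `m : ℕ+` being
the power sum `p_m`), via the recursion `(n+1) Q_{n+1} = ∑_{k=1}^{n+1} (1-t^k) p_k Q_{n+1-k}`. -/
noncomputable def Qcoef (t : F) : ℕ → MvPolynomial ℕ+ F
  | 0 => 1
  | n + 1 =>
      MvPolynomial.C (((n : F) + 1)⁻¹) *
        ∑ k ∈ Finset.range (n + 1),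
          MvPolynomial.C (1 - t ^ (k + 1)) * MvPolynomial.X k.succPNat *
            Qcoef t (n - k)
  decreasing_by exact Nat.lt_succ_of_le (Nat.sub_le n k)

/-- The adjoint `p_m^⊥ = m ∂/∂p_m` of multiplication by the power sum `p_m`. -/
noncomputable def pperp (m : ℕ+) : MvPolynomial ℕ+ F →ₗ[F] MvPolynomial ℕ+ F :=
  ((m : ℕ) : F) • (MvPolynomial.pderiv m).toLinearMap

/-- Coefficients `Q*_n` of `Q*(w) = exp(∑_{k≥1} (1-q^k)/k · p_k^⊥ w^k)`, via the
same recursion (the operators `p_k^⊥` commute). -/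
noncomputable def QstarOp (q : F) : ℕ → (MvPolynomial ℕ+ F →ₗ[F] MvPolynomial ℕ+ F)
  | 0 => LinearMap.id
  | n + 1 =>
      (((n : F) + 1)⁻¹) •
        ∑ k ∈ Finset.range (n + 1),
          (1 - q ^ (k + 1)) • ((pperp k.succPNat) ∘ₗ QstarOp q (n - k))
  decreasing_by exact Nat.lt_succ_of_le (Nat.sub_le n k)

/-- Multiplication by a symmetric function, as a linear operator. -/
noncomputable def mulOp (f : MvPolynomial ℕ+ F) :
    MvPolynomial ℕ+ F →ₗ[F] MvPolynomial ℕ+ F :=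
  LinearMap.mulLeft F f

open Finset in
/-- Coefficients of `(1-qx)(1-tx)/((1-x)(1-qtx))`. -/
noncomputable def cc (q t : F) (r : ℕ) : F :=
  if r = 0 then 1 else (1 - q) * (1 - t) * ∑ j ∈ range r, (q * t) ^ j

theorem geo_mul (a : F) :
    (PowerSeries.mk fun k => a ^ k) * (1 - PowerSeries.C a * PowerSeries.X) = 1 := by
  ext n
  cases n with
  | zero => simp
  | succ n =>
    rw [mul_sub, mul_one, mul_comm (PowerSeries.C a), ← mul_assoc, map_sub,
      PowerSeries.coeff_mul_C, PowerSeries.coeff_succ_mul_X]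
    simp [PowerSeries.coeff_one, pow_succ]

theorem cc_series (q t : F) :
    PowerSeries.mk (cc q t) = 1 + PowerSeries.C ((1 - q) * (1 - t)) * PowerSeries.X *
      ((PowerSeries.mk fun k => (q * t) ^ k) * (PowerSeries.mk fun k => (1 : F) ^ k)) := by
  ext n
  cases n with
  | zero => simp [cc]
  | succ n =>
    rw [map_add, mul_assoc, PowerSeries.coeff_C_mul, PowerSeries.coeff_succ_X_mul,
      PowerSeries.coeff_mul, Finset.Nat.sum_antidiagonal_eq_sum_range_succ_mk]
    simp [cc, PowerSeries.coeff_one]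

set_option linter.unusedSectionVars false

open PowerSeries in
theorem cc_rec (q t : F) (s : ℕ) :
    (s : F) * cc q t s =
      ∑ x ∈ Finset.HasAntidiagonal.antidiagonal s, (1 - q ^ x.1) * (1 - t ^ x.1) * cc q t x.2 := by
  have key : PowerSeries.X * derivative F (PowerSeries.mk (cc q t)) =
      PowerSeries.mk (fun k => (1 - q ^ k) * (1 - t ^ k)) * PowerSeries.mk (cc q t) := by
    have hG : PowerSeries.mk (fun k => (1 - q ^ k) * (1 - t ^ k)) =
        PowerSeries.mk (fun k => (1 : F) ^ k) - PowerSeries.mk (fun k => q ^ k) - PowerSeries.mk (fun k => t ^ k)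
          + PowerSeries.mk (fun k => (q * t) ^ k) := by
      ext n
      simp [mul_pow]; ring
    have h1 := geo_mul (1 : F)
    have hq := geo_mul q
    have ht := geo_mul t
    have hqt := geo_mul (q * t)
    have hc := cc_series q t
    rw [hG]
    generalize (PowerSeries.mk fun k => (1 : F) ^ k) = I1 at *
    generalize (PowerSeries.mk fun k => q ^ k) = Iq at *
    generalize (PowerSeries.mk fun k => t ^ k) = It at *
    generalize (PowerSeries.mk fun k => (q * t) ^ k) = Iqt at *
    generalize PowerSeries.mk (cc q t) = f at *
    simp only [map_mul, map_sub, map_one] at h1 hq ht hqt hc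
    have dC : ∀ a : F, derivative F (PowerSeries.C a) = 0 := fun a => derivative_C
    -- f * v = u
    have hv : f * ((1 - PowerSeries.X) * (1 - PowerSeries.C q * PowerSeries.C t * PowerSeries.X)) = (1 - PowerSeries.C q * PowerSeries.X) * (1 - PowerSeries.C t * PowerSeries.X) := by
      rw [hc]
      linear_combination ((1 - PowerSeries.C q) * (1 - PowerSeries.C t) * PowerSeries.X) * (Iqt * (1 - PowerSeries.C q * PowerSeries.C t * PowerSeries.X) * h1 + hqt)
    have hd := congrArg (derivative F) hv
    simp only [Derivation.leibniz, map_sub, Derivation.map_one_eq_zero, dC, smul_eq_mul,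
      derivative_X] at hd
    have hv0 : ((1 - PowerSeries.X) * (1 - PowerSeries.C q * PowerSeries.C t * PowerSeries.X) : PowerSeries F) ≠ 0 := by
      intro h
      have := congrArg PowerSeries.constantCoeff h
      simp at this
    apply mul_right_cancel₀ (mul_ne_zero hv0 hv0)
    linear_combination (PowerSeries.X * ((1 - PowerSeries.X) * (1 - PowerSeries.C q * PowerSeries.C t * PowerSeries.X))) * hd
      + (PowerSeries.X * ((1 - PowerSeries.C q * PowerSeries.C t * PowerSeries.X) + PowerSeries.C q * PowerSeries.C t * (1 - PowerSeries.X))) * hv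
      - ((I1 - Iq - It + Iqt) * ((1 - PowerSeries.X) * (1 - PowerSeries.C q * PowerSeries.C t * PowerSeries.X))) * hv
      - ((1 - PowerSeries.C q * PowerSeries.X) * (1 - PowerSeries.C t * PowerSeries.X) * (1 - PowerSeries.C q * PowerSeries.C t * PowerSeries.X)) * h1
      + ((1 - PowerSeries.C t * PowerSeries.X) * ((1 - PowerSeries.X) * (1 - PowerSeries.C q * PowerSeries.C t * PowerSeries.X))) * hq
      + ((1 - PowerSeries.C q * PowerSeries.X) * ((1 - PowerSeries.X) * (1 - PowerSeries.C q * PowerSeries.C t * PowerSeries.X))) * ht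
      - ((1 - PowerSeries.C q * PowerSeries.X) * (1 - PowerSeries.C t * PowerSeries.X) * (1 - PowerSeries.X)) * hqt
  have := congrArg (PowerSeries.coeff s) key
  rw [PowerSeries.coeff_mul s (PowerSeries.mk _)] at this
  simp only [PowerSeries.coeff_mk] at this
  rw [← this]
  cases s with
  | zero => simp
  | succ n =>
    rw [PowerSeries.coeff_succ_X_mul]
    simp [PowerSeries.coeff_derivative]; ring

/-- power sums, with `p_0 = 0`. -/
noncomputable def xx : ℕ → MvPolynomial ℕ+ F
  | 0 => 0
  | k + 1 => MvPolynomial.X k.succPNat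

noncomputable def dop : ℕ → (MvPolynomial ℕ+ F →ₗ[F] MvPolynomial ℕ+ F)
  | 0 => 0
  | k + 1 => pperp k.succPNat

noncomputable def Qe (t : F) (n k : ℕ) : MvPolynomial ℕ+ F :=
  if k ≤ n then Qcoef t (n - k) else 0

theorem Qcoef_rec (t : F) (n : ℕ) :
    (n : F) • Qcoef t n =
      ∑ x ∈ Finset.HasAntidiagonal.antidiagonal n, (1 - t ^ x.1) • (xx x.1 * Qcoef t x.2) := by
  cases n with
  | zero => simp
  | succ n =>
    have h : (n : F) + 1 ≠ 0 := by exact_mod_cast n.succ_ne_zero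
    rw [Finset.Nat.sum_antidiagonal_succ, Finset.Nat.sum_antidiagonal_eq_sum_range_succ_mk,
      Qcoef, ← MvPolynomial.smul_eq_C_mul, smul_smul]
    push_cast
    rw [mul_inv_cancel₀ h, one_smul]
    simp [xx, MvPolynomial.smul_eq_C_mul, mul_assoc]

theorem QstarOp_rec (q : F) (n : ℕ) :
    (n : F) • QstarOp q n =
      ∑ x ∈ Finset.HasAntidiagonal.antidiagonal n, (1 - q ^ x.1) • (dop x.1 ∘ₗ QstarOp q x.2) := by
  cases n with
  | zero => simp
  | succ n =>
    have h : (n : F) + 1 ≠ 0 := by exact_mod_cast n.succ_ne_zero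
    rw [Finset.Nat.sum_antidiagonal_succ, Finset.Nat.sum_antidiagonal_eq_sum_range_succ_mk,
      QstarOp, smul_smul]
    push_cast
    rw [mul_inv_cancel₀ h, one_smul]
    simp [dop]

theorem dop_mul (k : ℕ) (f g : MvPolynomial ℕ+ F) :
    dop k (f * g) = dop k f * g + f * dop k g := by
  cases k with
  | zero => simp [dop]
  | succ k =>
    simp only [dop, pperp, LinearMap.smul_apply, Derivation.coeFn_coe, Derivation.leibniz, smul_eq_mul, smul_add, MvPolynomial.smul_eq_C_mul]
    ring

theorem dop_xx (k j : ℕ) :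
    dop k (xx j : MvPolynomial ℕ+ F) = if j = k then MvPolynomial.C (k : F) else 0 := by
  cases k with
  | zero => simp [dop]
  | succ k =>
    cases j with
    | zero => simp [xx]
    | succ j =>
      by_cases h : j = k
      · subst h
        simp [dop, pperp, xx, MvPolynomial.smul_eq_C_mul]
      · have : k.succPNat ≠ j.succPNat := fun h' => h (Nat.succPNat_injective h').symm
        simp [dop, pperp, xx, h, MvPolynomial.pderiv_X, Pi.single_apply, this, this.symm]

theorem Qe_coeff (t : F) (n k : ℕ) :
    Qe t n k = PowerSeries.coeff n (PowerSeries.mk (Qcoef t) * PowerSeries.X ^ k) := by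
  rw [PowerSeries.coeff_mul_X_pow']
  simp [Qe]

theorem dop_Q (t : F) (k n : ℕ) : dop k (Qcoef t n) = (1 - t ^ k) • Qe t n k := by
  induction n using Nat.strong_induction_on with
  | _ n ih =>
  rcases Nat.eq_zero_or_pos n with rfl | hn
  · cases k with
    | zero => simp [dop]
    | succ k => simp [dop, pperp, Qe, Qcoef]
  have hn' : (n : F) ≠ 0 := by exact_mod_cast hn.ne'
  have h1 : (n : F) • dop k (Qcoef t n) = (n : F) • ((1 - t ^ k) • Qe t n k) := by
    rw [← map_smul, Qcoef_rec, map_sum]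
    have e : ∀ x ∈ Finset.HasAntidiagonal.antidiagonal n,
        dop k ((1 - t ^ x.1) • (xx x.1 * Qcoef t x.2)) =
          (if x.1 = k then ((k : F) * (1 - t ^ k)) • Qcoef t x.2 else 0)
           + (1 - t ^ k) • (((1 - t ^ x.1) • xx x.1) * Qe t x.2 k) := by
      intro x hx
      rw [Finset.HasAntidiagonal.mem_antidiagonal] at hx
      rw [map_smul, dop_mul, dop_xx]
      rcases Nat.eq_zero_or_pos x.1 with h0 | h0
      · simp only [h0, xx, pow_zero, sub_self, zero_smul, zero_mul, smul_zero, add_zero]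
        split_ifs with h
        · simp [← h]
        · rfl
      · rw [ih x.2 (by omega)]
        split_ifs with h
        · subst h
          simp only [MvPolynomial.smul_eq_C_mul, map_mul]
          ring
        · simp only [MvPolynomial.smul_eq_C_mul]
          ring
    rw [Finset.sum_congr rfl e, Finset.sum_add_distrib, ← Finset.smul_sum]
    have e2 : ∑ x ∈ Finset.HasAntidiagonal.antidiagonal n, ((1 - t ^ x.1) • xx x.1) * Qe t x.2 k
        = ((n : F) - k) • Qe t n k := by
      have : ∑ x ∈ Finset.HasAntidiagonal.antidiagonal n, ((1 - t ^ x.1) • xx x.1) * Qe t x.2 k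
        = PowerSeries.coeff n ((PowerSeries.mk fun j => (1 - t ^ j) • xx j) *
            (PowerSeries.mk (Qcoef t) * PowerSeries.X ^ k)) := by
        rw [PowerSeries.coeff_mul]
        simp [Qe_coeff]
      rw [this, ← mul_assoc, PowerSeries.coeff_mul_X_pow', Qe]
      split_ifs with h
      · rw [← Nat.cast_sub h, Qcoef_rec, PowerSeries.coeff_mul]
        simp
      · simp
    have e1 : ∑ x ∈ Finset.HasAntidiagonal.antidiagonal n,
        (if x.1 = k then ((k : F) * (1 - t ^ k)) • Qcoef t x.2 else 0)
        = ((k : F) * (1 - t ^ k)) • Qe t n k := by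
      rw [Finset.Nat.sum_antidiagonal_eq_sum_range_succ_mk]
      simp only [Finset.sum_ite_eq', Finset.mem_range, Qe, Nat.lt_succ_iff]
      split_ifs <;> simp
    rw [e1, e2, smul_smul, smul_smul, ← add_smul]
    congr 1; ring
  exact smul_right_injective _ hn' h1

theorem dop_Qe (t : F) (k n r : ℕ) : dop k (Qe t n r) = (1 - t ^ k) • Qe t n (k + r) := by
  by_cases h : r ≤ n
  · rw [Qe, if_pos h, dop_Q]
    simp only [Qe]
    congr 1
    by_cases h2 : k + r ≤ n
    · rw [if_pos h2, if_pos (by omega)]; congr 1; omega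
    · rw [if_neg h2, if_neg (by omega)]
  · rw [Qe, if_neg h, Qe, if_neg (by omega)]; simp

theorem main_rel (q t : F) (m n : ℕ) (f : MvPolynomial ℕ+ F) :
    QstarOp q m (Qcoef t n * f) =
      ∑ x ∈ Finset.HasAntidiagonal.antidiagonal m, cc q t x.1 • (Qe t n x.1 * QstarOp q x.2 f) := by
  induction m using Nat.strong_induction_on with
  | _ m ih =>
  rcases Nat.eq_zero_or_pos m with rfl | hm
  · simp [QstarOp, cc, Qe]
  have hm' : (m : F) ≠ 0 := by exact_mod_cast hm.ne'
  refine smul_right_injective _ hm' ?_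
  change (m : F) • _ = (m : F) • _
  have hrec : ∀ (m : ℕ) (g : MvPolynomial ℕ+ F), (m : F) • QstarOp q m g =
      ∑ x ∈ Finset.HasAntidiagonal.antidiagonal m, (1 - q ^ x.1) • dop x.1 (QstarOp q x.2 g) := by
    intro m g
    rw [← LinearMap.smul_apply, QstarOp_rec]
    simp
  rw [hrec]
  have e : ∀ x ∈ Finset.HasAntidiagonal.antidiagonal m,
      (1 - q ^ x.1) • dop x.1 (QstarOp q x.2 (Qcoef t n * f)) =
      ∑ y ∈ Finset.HasAntidiagonal.antidiagonal x.2,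
        (((1 - q ^ x.1) * (1 - t ^ x.1) * cc q t y.1) •
            (Qe t n (x.1 + y.1) * QstarOp q y.2 f)
         + cc q t y.1 • (Qe t n y.1 * ((1 - q ^ x.1) • dop x.1 (QstarOp q y.2 f)))) := by
    intro x hx
    rw [Finset.HasAntidiagonal.mem_antidiagonal] at hx
    rcases Nat.eq_zero_or_pos x.1 with h0 | h0
    · simp [h0]
    · rw [ih x.2 (by omega), map_sum, Finset.smul_sum]
      refine Finset.sum_congr rfl fun y _ => ?_
      rw [map_smul, dop_mul, dop_Qe]
      simp only [MvPolynomial.smul_eq_C_mul, map_mul]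
      ring
  rw [Finset.sum_congr rfl e]
  simp only [Finset.sum_add_distrib]
  have s1 : ∑ x ∈ Finset.HasAntidiagonal.antidiagonal m, ∑ y ∈ Finset.HasAntidiagonal.antidiagonal x.2,
        ((1 - q ^ x.1) * (1 - t ^ x.1) * cc q t y.1) •
            (Qe t n (x.1 + y.1) * QstarOp q y.2 f)
      = ∑ x ∈ Finset.HasAntidiagonal.antidiagonal m,
          ((x.1 : F) * cc q t x.1) • (Qe t n x.1 * QstarOp q x.2 f) := by
    simp only [cc_rec, Finset.sum_smul]
    rw [Finset.sum_sigma', Finset.sum_sigma']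
    refine Finset.sum_bij' (fun a _ => ⟨(a.1.1 + a.2.1, a.2.2), (a.1.1, a.2.1)⟩)
      (fun a _ => ⟨(a.2.1, a.2.2 + a.1.2), (a.2.2, a.1.2)⟩) ?_ ?_ ?_ ?_ ?_
    · rintro ⟨⟨a, b⟩, ⟨c, d⟩⟩ h; simp at h ⊢; omega
    · rintro ⟨⟨a, b⟩, ⟨c, d⟩⟩ h; simp at h ⊢; omega
    · rintro ⟨⟨a, b⟩, ⟨c, d⟩⟩ h; simp at h ⊢; omega
    · rintro ⟨⟨a, b⟩, ⟨c, d⟩⟩ h; simp at h ⊢; omega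
    · rintro ⟨⟨a, b⟩, ⟨c, d⟩⟩ h; simp
  have s2 : ∑ x ∈ Finset.HasAntidiagonal.antidiagonal m, ∑ y ∈ Finset.HasAntidiagonal.antidiagonal x.2,
        cc q t y.1 • (Qe t n y.1 * ((1 - q ^ x.1) • dop x.1 (QstarOp q y.2 f)))
      = ∑ x ∈ Finset.HasAntidiagonal.antidiagonal m,
          cc q t x.1 • (Qe t n x.1 * ((x.2 : F) • QstarOp q x.2 f)) := by
    simp only [hrec, Finset.mul_sum, Finset.smul_sum]
    rw [Finset.sum_sigma', Finset.sum_sigma']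
    refine Finset.sum_bij' (fun a _ => ⟨(a.2.1, a.1.1 + a.2.2), (a.1.1, a.2.2)⟩)
      (fun a _ => ⟨(a.2.1, a.1.1 + a.2.2), (a.1.1, a.2.2)⟩) ?_ ?_ ?_ ?_ ?_
    · rintro ⟨⟨a, b⟩, ⟨c, d⟩⟩ h; simp at h ⊢; omega
    · rintro ⟨⟨a, b⟩, ⟨c, d⟩⟩ h; simp at h ⊢; omega
    · rintro ⟨⟨a, b⟩, ⟨c, d⟩⟩ h; simp at h ⊢; omega
    · rintro ⟨⟨a, b⟩, ⟨c, d⟩⟩ h; simp at h ⊢; omega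
    · rintro ⟨⟨a, b⟩, ⟨c, d⟩⟩ h; simp
  rw [s1, s2, ← Finset.sum_add_distrib, Finset.smul_sum]
  refine Finset.sum_congr rfl fun x hx => ?_
  rw [Finset.HasAntidiagonal.mem_antidiagonal] at hx
  rw [← hx]
  push_cast
  simp only [MvPolynomial.smul_eq_C_mul, map_mul, map_add]
  ring

/-- Appendix D of the paper: the commutation relation
`[Q_m^*, Q_n] = (1-q)(1-t) ∑_{i=1}^{min(m,n)} ∑_{j=0}^{min(m,n)-i} (qt)^j Q_{n-i-j} Q*_{m-i-j}`,
where `Q_n` acts by multiplication. -/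
theorem Qstar_Q_commutator (q t : F) (m n : ℕ) :
    QstarOp q m ∘ₗ mulOp (Qcoef t n) - mulOp (Qcoef t n) ∘ₗ QstarOp q m
      = ((1 - q) * (1 - t)) •
          ∑ i ∈ Finset.Icc 1 (min m n), ∑ j ∈ Finset.range (min m n - i + 1),
            ((q * t) ^ j) • (mulOp (Qcoef t (n - i - j)) ∘ₗ QstarOp q (m - i - j)) := by
  refine LinearMap.ext fun f => ?_
  simp only [LinearMap.sub_apply, LinearMap.comp_apply, mulOp, LinearMap.mulLeft_apply,
    LinearMap.smul_apply, LinearMap.sum_apply]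
  rw [main_rel, Finset.Nat.sum_antidiagonal_eq_sum_range_succ_mk, Finset.sum_range_succ']
  have h0 : cc q t 0 • (Qe t n 0 * QstarOp q (m - 0) f) = Qcoef t n * QstarOp q m f := by
    simp [cc, Qe]
  simp only [h0, add_sub_cancel_right]
  have h1 : ∑ k ∈ Finset.range m, cc q t (k + 1) • (Qe t n (k + 1) * QstarOp q (m - (k + 1)) f)
      = ∑ k ∈ Finset.range (min m n),
          cc q t (k + 1) • (Qe t n (k + 1) * QstarOp q (m - (k + 1)) f) := by
    symm
    apply Finset.sum_subset
    · intro x hx; simp at hx ⊢; omega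
    · intro x hx hx'
      simp only [Finset.mem_range, lt_min_iff, not_and, not_lt] at hx hx'
      have := hx' hx
      rw [Qe, if_neg (by omega)]; simp
  rw [h1]
  have h2 : ∀ k ∈ Finset.range (min m n),
      cc q t (k + 1) • (Qe t n (k + 1) * QstarOp q (m - (k + 1)) f) =
      ((1 - q) * (1 - t)) • ∑ j ∈ Finset.range (k + 1),
        (q * t) ^ j • (Qcoef t (n - (k + 1)) * QstarOp q (m - (k + 1)) f) := by
    intro k hk
    simp only [Finset.mem_range, lt_min_iff] at hk
    rw [cc, if_neg (by omega), Qe, if_pos (by omega), ← smul_smul, Finset.sum_smul]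
  rw [Finset.sum_congr rfl h2, ← Finset.smul_sum]
  congr 1
  rw [Finset.sum_sigma', Finset.sum_sigma']
  refine Finset.sum_bij' (fun a _ => ⟨a.1 + 1 - a.2, a.2⟩)
      (fun a _ => ⟨a.1 + a.2 - 1, a.2⟩) ?_ ?_ ?_ ?_ ?_
  · rintro ⟨a, b⟩ h; simp at h ⊢; omega
  · rintro ⟨a, b⟩ h; simp at h ⊢; omega
  · rintro ⟨a, b⟩ h; simp at h ⊢; omega
  · rintro ⟨a, b⟩ h; simp at h ⊢; omega
  · rintro ⟨a, b⟩ h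
    simp at h
    have e1 : n - (a + 1 - b) - b = n - (a + 1) := by omega
    have e2 : m - (a + 1 - b) - b = m - (a + 1) := by omega
    simp only [e1, e2]
end

section
/- Let $J_0^{[1]} = \oint \frac{dz}{z} e^{[1]}(z) - 1$ and $J_0^{[-1]}$ its image under $q \mapsto q^{-1}, t \mapsto t^{-1}$, where $e(z) = \exp(\sum_{n\geq 1}\frac{1-t^n}{n}z^{-n}p_n)\exp(-\sum_{n\geq 1}\frac{1-q^{-n}}{n}z^n p_n^\perp)$. Then $[J_0^{[1]}, J_0^{[-1]}] = 0$ as operators on $\Lambda$. -/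
open MvPolynomial

variable {F : Type*} [Field F] [CharZero F]

variable {F : Type*} [Field F] [CharZero F]

/-- The weighted degree of a symmetric function, where the power sum `p_m` has
weight `m` (i.e. the degree in the underlying variables `x_i`). -/
noncomputable def wdeg (f : MvPolynomial ℕ+ F) : ℕ :=
  MvPolynomial.weightedTotalDegree (fun m : ℕ+ => (m : ℕ)) f

/-- The truncation `∑_{n=0}^{M} q^{-sn} Q_n^{[s]} Q_n^{*[s]}` of the operator
`1 + J₀^{[s]}`; here the parameters are already specialized, so `s = 1`
corresponds to `(q, t)` and `s = -1` to `(q⁻¹, t⁻¹)`. -/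
noncomputable def Jop (q t : F) (M : ℕ) : MvPolynomial ℕ+ F →ₗ[F] MvPolynomial ℕ+ F :=
  ∑ n ∈ Finset.range (M + 1),
    (q ^ (-(n : ℤ))) • (mulOp (Qcoef t n) ∘ₗ QstarOp q n)

section J0Helpers

set_option linter.unusedSectionVars false

open PowerSeries in
theorem J0_ode_unique {A : Type*} [CommRing A] [IsDomain A] [CharZero A]
    (h f g : PowerSeries A) (hf : PowerSeries.derivative A f = h * f)
    (hg : PowerSeries.derivative A g = h * g)
    (h0 : PowerSeries.coeff 0 f = PowerSeries.coeff 0 g) : f = g := by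
  ext n
  induction n using Nat.strong_induction_on with
  | _ n ih =>
    cases n with
    | zero => exact h0
    | succ n =>
      have h1 := congrArg (PowerSeries.coeff n) hf
      have h2 := congrArg (PowerSeries.coeff n) hg
      rw [PowerSeries.coeff_derivative, PowerSeries.coeff_mul] at h1 h2
      have h3 : (PowerSeries.coeff (n+1) f) * ((n : A) + 1)
          = (PowerSeries.coeff (n+1) g) * ((n : A) + 1) := by
        rw [h1, h2]
        refine Finset.sum_congr rfl fun p hp => ?_
        rw [ih p.2 (by have := Finset.HasAntidiagonal.mem_antidiagonal.1 hp; omega)]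
      exact mul_right_cancel₀ (Nat.cast_add_one_ne_zero n) h3

/-- generating series -/
noncomputable def J0Qser (s : F) : PowerSeries (MvPolynomial ℕ+ F) := PowerSeries.mk (Qcoef s)

/-- log-derivative -/
noncomputable def J0hser (s : F) : PowerSeries (MvPolynomial ℕ+ F) :=
  PowerSeries.mk fun k => MvPolynomial.C (1 - s ^ (k + 1)) * MvPolynomial.X k.succPNat

theorem J0Qcoef_zero (s : F) : Qcoef s 0 = 1 := by rw [Qcoef]

theorem J0Qser_ode (s : F) :
    PowerSeries.derivative _ (J0Qser s) = J0hser s * J0Qser s := by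
  ext1 n
  rw [PowerSeries.coeff_derivative, PowerSeries.coeff_mul, J0Qser, PowerSeries.coeff_mk, Qcoef,
    Finset.Nat.sum_antidiagonal_eq_sum_range_succ_mk]
  simp only [J0hser, PowerSeries.coeff_mk]
  have : ((n : MvPolynomial ℕ+ F) + 1) = MvPolynomial.C ((n : F) + 1) := by simp
  rw [this, mul_right_comm, ← MvPolynomial.C_mul, inv_mul_cancel₀ (Nat.cast_add_one_ne_zero n)]
  simp

theorem J0_derivative_rescale {A : Type*} [CommRing A] (a : A) (f : PowerSeries A) :
    PowerSeries.derivative A (PowerSeries.rescale a f)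
      = PowerSeries.C a * PowerSeries.rescale a (PowerSeries.derivative A f) := by
  ext n
  simp only [PowerSeries.coeff_derivative, PowerSeries.coeff_rescale, PowerSeries.coeff_C_mul]
  ring

theorem J0_derivative_mul {A : Type*} [CommRing A] (f g : PowerSeries A) :
    PowerSeries.derivative A (f * g)
      = f * PowerSeries.derivative A g + g * PowerSeries.derivative A f := by
  rw [Derivation.leibniz, smul_eq_mul, smul_eq_mul]

theorem J0_derivative_map {A B : Type*} [CommRing A] [CommRing B] (a : A →+* B)
    (f : PowerSeries A) :
    PowerSeries.derivative B (PowerSeries.map a f)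
      = PowerSeries.map a (PowerSeries.derivative A f) := by
  ext n
  simp [PowerSeries.coeff_derivative]

/-- `Q(z) R(tz) = 1` -/
theorem J0_QR (t : F) (ht : t ≠ 0) :
    J0Qser t * PowerSeries.rescale (MvPolynomial.C t) (J0Qser t⁻¹) = 1 := by
  apply J0_ode_unique 0
  · rw [Derivation.leibniz, J0_derivative_rescale, J0Qser_ode, J0Qser_ode, map_mul]
    have : PowerSeries.C (MvPolynomial.C t) *
        PowerSeries.rescale (MvPolynomial.C t) (J0hser t⁻¹) = - J0hser t := by
      ext1 n
      simp only [J0hser, PowerSeries.coeff_C_mul, PowerSeries.coeff_rescale, PowerSeries.coeff_mk,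
        map_neg, ← MvPolynomial.C_pow]
      rw [← mul_assoc, ← mul_assoc, ← MvPolynomial.C_mul, ← MvPolynomial.C_mul,
        ← neg_mul, ← MvPolynomial.C_neg]
      congr 2
      have h1 : t ^ (n + 1) * t⁻¹ ^ (n + 1) = 1 := by rw [← mul_pow, mul_inv_cancel₀ ht, one_pow]
      rw [pow_succ' t] at h1 ⊢
      linear_combination - h1
    simp only [smul_eq_mul]
    linear_combination (J0Qser t * PowerSeries.rescale (MvPolynomial.C t) (J0Qser t⁻¹)) * this
  · rw [← PowerSeries.C.map_one]; simp
  · simp [PowerSeries.coeff_mul, J0Qser, J0Qcoef_zero]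

theorem J0_QR_coeff (t : F) (ht : t ≠ 0) (N : ℕ) (hN : N ≠ 0) :
    ∑ m ∈ Finset.range (N + 1), (MvPolynomial.C (t ^ (N - m))) * (Qcoef t m * Qcoef t⁻¹ (N - m))
      = 0 := by
  have h := congrArg (PowerSeries.coeff N) (J0_QR t ht)
  rw [PowerSeries.coeff_mul, Finset.Nat.sum_antidiagonal_eq_sum_range_succ_mk,
    PowerSeries.coeff_one, if_neg hN] at h
  rw [← h]
  refine Finset.sum_congr rfl fun m _ => ?_
  simp only [J0Qser, PowerSeries.coeff_rescale, PowerSeries.coeff_mk, MvPolynomial.C_pow]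
  ring

/-- The coefficients of the normal-ordering factor. -/
noncomputable def J0phi (a s : F) (k : ℕ) : F :=
  if k = 0 then 1 else (1 - a) * (1 - s) * ∑ j ∈ Finset.range k, (a * s) ^ j

theorem J0_geom (c : F) : (1 - PowerSeries.C c * PowerSeries.X) *
    PowerSeries.mk (fun k => c ^ k) = 1 := by
  ext n
  rw [sub_mul, one_mul, mul_assoc]
  cases n with
  | zero => simp
  | succ n =>
    rw [map_sub, PowerSeries.coeff_C_mul, PowerSeries.coeff_succ_X_mul]
    simp [PowerSeries.coeff_one, pow_succ']

theorem J0_phi_series (a s : F) : (1 - PowerSeries.X) * (1 - PowerSeries.C (a*s) * PowerSeries.X)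
    * PowerSeries.mk (J0phi a s) =
    (1 - PowerSeries.C a * PowerSeries.X) * (1 - PowerSeries.C s * PowerSeries.X) := by
  have h1 : (1 - PowerSeries.X) * PowerSeries.mk (J0phi a s) =
      1 - PowerSeries.X + PowerSeries.C ((1-a)*(1-s)) * PowerSeries.X *
        PowerSeries.mk (fun k => (a*s) ^ k) := by
    ext n
    rw [sub_mul, one_mul, mul_assoc]
    rcases n with _ | _ | n
    · simp [J0phi]
    · rw [map_sub, map_add, PowerSeries.coeff_C_mul, PowerSeries.coeff_succ_X_mul,
        PowerSeries.coeff_succ_X_mul]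
      simp [J0phi, PowerSeries.coeff_one]
      ring
    · rw [map_sub, map_add, PowerSeries.coeff_C_mul, PowerSeries.coeff_succ_X_mul,
        PowerSeries.coeff_succ_X_mul]
      simp [J0phi, PowerSeries.coeff_one, PowerSeries.coeff_X, Finset.sum_range_succ _ (n+1)]
      ring
  have h2 := J0_geom (a*s)
  simp only [map_mul, map_sub, map_one] at *
  linear_combination (1 - PowerSeries.C a * PowerSeries.C s * PowerSeries.X) * h1
    + (1 - PowerSeries.C a) * (1 - PowerSeries.C s) * PowerSeries.X * h2

/-- log-derivative of phi -/
noncomputable def J0gser (a s : F) : PowerSeries F :=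
  PowerSeries.mk fun k => (1 - s ^ (k + 1)) * (1 - a ^ (k+1))

theorem J0_phi_ode (a s : F) : PowerSeries.derivative F (PowerSeries.mk (J0phi a s)) =
    J0gser a s * PowerSeries.mk (J0phi a s) := by
  have hg : J0gser a s = PowerSeries.mk (fun k => (1:F) ^ k)
      - PowerSeries.C s * PowerSeries.mk (fun k => s ^ k)
      - PowerSeries.C a * PowerSeries.mk (fun k => a ^ k)
      + PowerSeries.C (a*s) * PowerSeries.mk (fun k => (a*s) ^ k) := by
    ext n
    simp only [J0gser, map_add, map_sub, PowerSeries.coeff_C_mul, PowerSeries.coeff_mk]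
    ring
  have h1 := J0_geom (1 : F)
  have h2 := J0_geom s
  have h3 := J0_geom a
  have h4 := J0_geom (a*s)
  have hphi := J0_phi_series a s
  have hd := congrArg (PowerSeries.derivative F) hphi
  simp only [Derivation.leibniz, map_sub, Derivation.map_one_eq_zero, PowerSeries.derivative_C,
    PowerSeries.derivative_X, smul_eq_mul] at hd
  rw [hg]
  generalize PowerSeries.mk (fun k => (1:F) ^ k) = g1 at *
  generalize PowerSeries.mk (fun k => s ^ k) = g2 at *
  generalize PowerSeries.mk (fun k => a ^ k) = g3 at *
  generalize PowerSeries.mk (fun k => (a*s) ^ k) = g4 at *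
  generalize PowerSeries.derivative F (PowerSeries.mk (J0phi a s)) = d at *
  generalize (PowerSeries.mk (J0phi a s)) = p at *
  simp only [map_mul, map_one, one_mul] at *
  generalize PowerSeries.C a = A at *
  generalize PowerSeries.C s = S at *
  generalize (PowerSeries.X : PowerSeries F) = X at *
  have hp : p = (1 - A * X) * (1 - S * X) * g1 * g4 := by
    linear_combination g1 * g4 * hphi - p * ((1 - A*S*X) * g4) * h1 - p * h4
  have hd' : d = g1 * g4 * (-A * (1 - S*X) - S * (1 - A*X) + p * (1 - A*S*X) + p * (1-X) * (A*S)) := by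
    linear_combination g1 * g4 * hd - d * ((1 - A*S*X) * g4) * h1 - d * h4
  linear_combination hd' + p * g1 * h4 + p * (A * S) * g4 * h1 + A * g3 * hp
    + A * (1 - S * X) * g1 * g4 * h3 + S * g2 * hp + S * (1 - A * X) * g1 * g4 * h2

/-- The algebra map `f ↦ Q*(w) f`. -/
noncomputable def J0Phi (a : F) :
    MvPolynomial ℕ+ F →ₐ[F] Polynomial (MvPolynomial ℕ+ F) :=
  MvPolynomial.aeval fun k : ℕ+ => Polynomial.C (MvPolynomial.X k)
    + Polynomial.C (MvPolynomial.C (1 - a ^ (k : ℕ))) * Polynomial.X ^ (k : ℕ)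

theorem J0Phi_X (a : F) (k : ℕ+) : J0Phi a (MvPolynomial.X k) = Polynomial.C (MvPolynomial.X k)
    + Polynomial.C (MvPolynomial.C (1 - a ^ (k : ℕ))) * Polynomial.X ^ (k : ℕ) := by
  simp [J0Phi]

theorem J0Phi_C (a : F) (c : F) :
    J0Phi a (MvPolynomial.C c) = Polynomial.C (MvPolynomial.C c) := by
  rw [← MvPolynomial.algebraMap_eq, AlgHom.commutes]; rfl

theorem J0Phi_mul_X (a : F) (f : MvPolynomial ℕ+ F) (i : ℕ+) (m : ℕ) :
    (J0Phi a (f * MvPolynomial.X i)).coeff m = (J0Phi a f).coeff m * MvPolynomial.X i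
      + if (i : ℕ) ≤ m then MvPolynomial.C (1 - a ^ (i : ℕ)) * (J0Phi a f).coeff (m - i) else 0 := by
  rw [map_mul, J0Phi_X, mul_add, Polynomial.coeff_add, Polynomial.coeff_mul_C, mul_left_comm,
    Polynomial.coeff_C_mul, Polynomial.coeff_mul_X_pow']
  split_ifs <;> simp

theorem J0Phi_coeff_zero (a : F) (f : MvPolynomial ℕ+ F) : (J0Phi a f).coeff 0 = f := by
  induction f using MvPolynomial.induction_on with
  | C c => rw [J0Phi_C]; simp
  | add f g hf hg => rw [map_add, Polynomial.coeff_add, hf, hg]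
  | mul_X f i hf => rw [J0Phi_mul_X, hf, if_neg (by have := i.pos; omega), add_zero]

theorem J0_pperp_mul_X (k i : ℕ+) (f : MvPolynomial ℕ+ F) :
    pperp k (f * MvPolynomial.X i) = pperp k f * MvPolynomial.X i
      + if k = i then ((i : ℕ) : F) • f else 0 := by
  simp only [pperp, LinearMap.smul_apply, Derivation.coeFn_coe]
  rw [MvPolynomial.pderiv_mul]
  by_cases h : k = i
  · subst h
    simp [smul_add]
  · rw [MvPolynomial.pderiv_X_of_ne (Ne.symm h)]
    simp [h]

theorem J0_pperp_C_mul (k : ℕ+) (c : F) (f : MvPolynomial ℕ+ F) :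
    pperp k (MvPolynomial.C c * f) = MvPolynomial.C c * pperp k f := by
  rw [MvPolynomial.C_mul', map_smul, MvPolynomial.C_mul']

theorem J0Phi_rec (a : F) (f : MvPolynomial ℕ+ F) : ∀ n : ℕ,
    ((n : F) + 1) • (J0Phi a f).coeff (n + 1) =
      ∑ k ∈ Finset.range (n + 1),
        (1 - a ^ (k + 1)) • pperp k.succPNat ((J0Phi a f).coeff (n - k)) := by
  induction f using MvPolynomial.induction_on with
  | C c =>
    intro n
    rw [J0Phi_C, Polynomial.coeff_C_succ, smul_zero, eq_comm]
    refine Finset.sum_eq_zero fun k _ => ?_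
    rw [Polynomial.coeff_C]
    split_ifs <;> simp [pperp]
  | add f g hf hg =>
    intro n
    simp only [map_add, Polynomial.coeff_add, smul_add, hf, hg, Finset.sum_add_distrib]
  | mul_X f i hf =>
    intro n
    have hi := i.pos
    simp only [J0Phi_mul_X, map_add, J0_pperp_mul_X, smul_add, Finset.sum_add_distrib]
    simp only [← smul_mul_assoc]
    rw [hf n, Finset.sum_mul, add_assoc]
    congr 1
    by_cases h : (i : ℕ) ≤ n + 1
    · rw [if_pos h]
      have e1 : ∑ x ∈ Finset.range (n + 1), (1 - a ^ (x + 1)) •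
          (if x.succPNat = i then ((i : ℕ) : F) • (J0Phi a f).coeff (n - x) else 0)
          = (1 - a ^ (i : ℕ)) • ((i : ℕ) : F) • (J0Phi a f).coeff (n + 1 - i) := by
        rw [Finset.sum_eq_single ((i : ℕ) - 1)]
        · have : ((i : ℕ) - 1).succPNat = i := by
            apply PNat.eq; simp only [Nat.succPNat_coe, Nat.succ_eq_add_one]; omega
          rw [if_pos this]
          have h2 : (i : ℕ) - 1 + 1 = i := by omega
          have h3 : n - ((i : ℕ) - 1) = n + 1 - i := by omega
          rw [h2, h3]
        · intro b _ hb
          rw [if_neg, smul_zero]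
          intro h'
          have := congrArg PNat.val h'
          simp only [Nat.succPNat_coe, Nat.succ_eq_add_one] at this
          apply hb
          change b + 1 = (i : ℕ) at this
          omega
        · intro h'
          exact absurd (Finset.mem_range.2 (by omega)) h'
      rw [e1]
      have e2 : ∑ x ∈ Finset.range (n + 1), (1 - a ^ (x + 1)) • pperp x.succPNat
          (if (i : ℕ) ≤ n - x then
            MvPolynomial.C (1 - a ^ (i : ℕ)) * (J0Phi a f).coeff (n - x - i) else 0)
          = (1 - a ^ (i : ℕ)) • (((n + 1 - i : ℕ) : F) • (J0Phi a f).coeff (n + 1 - i)) := by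
        rcases Nat.eq_or_lt_of_le h with h' | h'
        · rw [Finset.sum_eq_zero]
          · simp [h']
          · intro x _
            rw [if_neg (by omega)]; simp
        · obtain ⟨l, hl⟩ : ∃ l, n = i + l := ⟨n - i, by omega⟩
          have h2 : n + 1 - (i : ℕ) = l + 1 := by omega
          rw [h2, Nat.cast_succ, hf l, Finset.smul_sum]
          symm
          apply Finset.sum_subset_zero_on_sdiff
          · intro x; simp only [Finset.mem_range]; omega
          · intro x hx
            simp only [Finset.mem_sdiff, Finset.mem_range] at hx
            rw [if_neg (by omega)]; simp
          · intro x hx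
            simp only [Finset.mem_range] at hx
            rw [if_pos (by omega), J0_pperp_C_mul, MvPolynomial.C_mul', smul_comm]
            have h3 : n - x - (i : ℕ) = l - x := by omega
            rw [h3]
      rw [e2, MvPolynomial.C_mul', smul_comm, ← smul_add, ← add_smul]
      congr 2
      rw [← Nat.cast_add, Nat.add_sub_cancel' h, Nat.cast_succ]
    · rw [if_neg h, smul_zero, eq_comm]
      rw [Finset.sum_eq_zero, Finset.sum_eq_zero, add_zero]
      · intro x hx
        simp only [Finset.mem_range] at hx
        rw [if_neg (by omega)]; simp
      · intro x hx
        simp only [Finset.mem_range] at hx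
        rw [if_neg, smul_zero]
        intro h'
        have := congrArg PNat.val h'
        change x + 1 = (i : ℕ) at this
        omega

theorem J0_Qstar (a : F) (n : ℕ) (f : MvPolynomial ℕ+ F) :
    QstarOp a n f = (J0Phi a f).coeff n := by
  induction n using Nat.strong_induction_on with
  | _ n ih =>
    cases n with
    | zero => rw [QstarOp, J0Phi_coeff_zero]; rfl
    | succ n =>
      rw [QstarOp, LinearMap.smul_apply, LinearMap.sum_apply,
        inv_smul_eq_iff₀ (Nat.cast_add_one_ne_zero n), J0Phi_rec]
      refine Finset.sum_congr rfl fun k _ => ?_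
      rw [LinearMap.smul_apply, LinearMap.comp_apply, ih _ (by omega)]

theorem J0_map_Phi (a s : F) :
    PowerSeries.map (J0Phi a).toRingHom (J0Qser s) =
      PowerSeries.map Polynomial.C (J0Qser s) *
        PowerSeries.rescale Polynomial.X (PowerSeries.map
          ((Polynomial.C (R := MvPolynomial ℕ+ F)).comp MvPolynomial.C)
            (PowerSeries.mk (J0phi a s))) := by
  apply J0_ode_unique (PowerSeries.map (J0Phi a).toRingHom (J0hser s))
  · rw [J0_derivative_map, J0Qser_ode, map_mul]
  · rw [J0_derivative_mul, J0_derivative_rescale, J0_derivative_map, J0_derivative_map,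
      J0Qser_ode, J0_phi_ode]
    simp only [map_mul]
    have : PowerSeries.map (J0Phi a).toRingHom (J0hser s) =
        PowerSeries.map Polynomial.C (J0hser s) + PowerSeries.C Polynomial.X *
          PowerSeries.rescale Polynomial.X (PowerSeries.map
          ((Polynomial.C (R := MvPolynomial ℕ+ F)).comp MvPolynomial.C) (J0gser a s)) := by
      ext1 n
      simp only [J0hser, J0gser, map_add, PowerSeries.coeff_map, PowerSeries.coeff_mk,
        PowerSeries.coeff_C_mul, PowerSeries.coeff_rescale, AlgHom.toRingHom_eq_coe,
        RingHom.coe_coe, map_mul, J0Phi_C, J0Phi_X, Nat.succPNat_coe, Nat.succ_eq_add_one,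
        RingHom.comp_apply]
      ring
    rw [this]
    ring
  · simp [PowerSeries.coeff_mul, J0Qser, J0Qcoef_zero, J0phi]

/-- normal ordering -/
theorem J0_normal (a s : F) (m n : ℕ) (f : MvPolynomial ℕ+ F) :
    QstarOp a m (Qcoef s n * f) = ∑ j ∈ Finset.range (n + 1),
      if j ≤ m then MvPolynomial.C (J0phi a s j) * Qcoef s (n - j) * QstarOp a (m - j) f
      else 0 := by
  have h := congrArg (PowerSeries.coeff n) (J0_map_Phi a s)
  rw [PowerSeries.coeff_map, mul_comm, PowerSeries.coeff_mul,
    Finset.Nat.sum_antidiagonal_eq_sum_range_succ_mk] at h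
  simp only [J0Qser, PowerSeries.coeff_map, PowerSeries.coeff_mk,
    PowerSeries.coeff_rescale, AlgHom.toRingHom_eq_coe, RingHom.coe_coe,
        RingHom.comp_apply] at h
  rw [J0_Qstar, map_mul, h, Finset.sum_mul, Polynomial.finsetSum_coeff]
  refine Finset.sum_congr rfl fun j _ => ?_
  rw [mul_assoc, mul_assoc, Polynomial.coeff_X_pow_mul', ← mul_assoc, ← Polynomial.C_mul,
    Polynomial.coeff_C_mul, J0_Qstar]

theorem J0_QsRs (q : F) (hq : q ≠ 0) (N : ℕ) (hN : N ≠ 0) (f : MvPolynomial ℕ+ F) :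
    ∑ m ∈ Finset.range (N + 1),
      MvPolynomial.C (q ^ (N - m)) * QstarOp q m (QstarOp q⁻¹ (N - m) f) = 0 := by
  have key : ∀ f : MvPolynomial ℕ+ F, Polynomial.eval₂ (J0Phi q).toRingHom
      (Polynomial.C (MvPolynomial.C q) * Polynomial.X) (J0Phi q⁻¹ f) = Polynomial.C f := by
    intro f
    induction f using MvPolynomial.induction_on with
    | C c => rw [J0Phi_C, Polynomial.eval₂_C]; exact J0Phi_C q c
    | add f g hf hg => rw [map_add, Polynomial.eval₂_add, hf, hg, map_add]
    | mul_X f i hf =>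
      rw [map_mul, Polynomial.eval₂_mul, hf, map_mul, J0Phi_X]
      congr 1
      simp only [Polynomial.eval₂_add, Polynomial.eval₂_mul, Polynomial.eval₂_C,
        Polynomial.eval₂_pow, Polynomial.eval₂_X, AlgHom.toRingHom_eq_coe, RingHom.coe_coe,
        J0Phi_X, J0Phi_C]
      have h1 : q⁻¹ ^ (i : ℕ) * q ^ (i : ℕ) = 1 := by
        rw [← mul_pow, inv_mul_cancel₀ hq, one_pow]
      have h2 := congrArg (fun x => Polynomial.C (MvPolynomial.C (σ := ℕ+) x)) h1
      simp only [map_mul, map_pow, map_one, map_sub] at h2 ⊢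
      linear_combination - Polynomial.X ^ (i : ℕ) * h2
  have h := congrArg (fun p => Polynomial.coeff p N) (key f)
  simp only [Polynomial.coeff_C, if_neg hN] at h
  rw [Polynomial.eval₂_eq_sum_range' _ (n := (J0Phi q⁻¹ f).natDegree + 1 + (N + 1)) (by omega),
    Polynomial.finsetSum_coeff] at h
  rw [← h, ← Finset.sum_range_reflect]
  apply Finset.sum_subset_zero_on_sdiff
  · intro x; simp only [Finset.mem_range]; omega
  · intro x hx
    simp only [Finset.mem_sdiff, Finset.mem_range] at hx
    rw [mul_pow, ← mul_assoc, Polynomial.coeff_mul_X_pow', if_neg (by omega)]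
  · intro x hx
    simp only [Finset.mem_range] at hx
    have h1 : N - (N + 1 - 1 - x) = x := by omega
    rw [h1, mul_pow, ← mul_assoc, Polynomial.coeff_mul_X_pow', if_pos (by omega), ← map_pow,
      Polynomial.coeff_mul_C, J0_Qstar, J0_Qstar, map_pow, mul_comm]
    rfl

theorem J0_pperp_comm (k l : ℕ+) (f : MvPolynomial ℕ+ F) :
    pperp k (pperp l f) = pperp l (pperp k f) := by
  simp only [pperp, LinearMap.smul_apply, Derivation.coeFn_coe,
    map_smul]
  rw [smul_comm]
  congr 2
  ext m
  simp only [MvPolynomial.coeff_pderiv]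
  by_cases h : k = l
  · subst h; rfl
  · simp [h, Ne.symm h, add_right_comm]
    ring

theorem J0_pperp_Qstar (a : F) (k : ℕ+) (n : ℕ) (f : MvPolynomial ℕ+ F) :
    pperp k (QstarOp a n f) = QstarOp a n (pperp k f) := by
  induction n using Nat.strong_induction_on with
  | _ n ih =>
    cases n with
    | zero => simp [QstarOp]
    | succ n =>
      simp only [QstarOp, LinearMap.smul_apply, LinearMap.sum_apply, LinearMap.comp_apply,
        map_smul, map_sum]
      congr 1
      refine Finset.sum_congr rfl fun j _ => ?_
      rw [J0_pperp_comm, ih _ (by omega)]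

theorem J0_Qstar_comm (a b : F) (m n : ℕ) (f : MvPolynomial ℕ+ F) :
    QstarOp b m (QstarOp a n f) = QstarOp a n (QstarOp b m f) := by
  induction n using Nat.strong_induction_on with
  | _ n ih =>
    cases n with
    | zero => simp [QstarOp]
    | succ n =>
      simp only [QstarOp, LinearMap.smul_apply, LinearMap.sum_apply, LinearMap.comp_apply,
        map_smul, map_sum]
      congr 1
      refine Finset.sum_congr rfl fun j _ => ?_
      rw [← J0_pperp_Qstar, ih _ (by omega)]

/-- weighted degree at most `d` -/
def J0LE (d : ℤ) (f : MvPolynomial ℕ+ F) : Prop :=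
  ∀ s, MvPolynomial.coeff s f ≠ 0 → (Finsupp.weight (fun m : ℕ+ => (m : ℕ)) s : ℤ) ≤ d

theorem J0LE_pperp (d : ℤ) (k : ℕ+) (f : MvPolynomial ℕ+ F) (h : J0LE d f) :
    J0LE (d - k) (pperp k f) := by
  intro s hs
  simp only [pperp, LinearMap.smul_apply, Derivation.coeFn_coe,
    MvPolynomial.coeff_smul, MvPolynomial.coeff_pderiv] at hs
  have h1 := h (s + Finsupp.single k 1) (fun h0 => hs (by rw [h0]; simp))
  rw [map_add, Finsupp.weight_single] at h1
  simp at h1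
  linarith

theorem J0LE_Qstar (a : F) (n : ℕ) : ∀ (d : ℤ) (f : MvPolynomial ℕ+ F), J0LE d f →
    J0LE (d - n) (QstarOp a n f) := by
  induction n using Nat.strong_induction_on with
  | _ n ih =>
    intro d f hf
    cases n with
    | zero => simpa [QstarOp] using hf
    | succ n =>
      intro s hs
      rw [QstarOp] at hs
      simp only [LinearMap.smul_apply, LinearMap.sum_apply, LinearMap.comp_apply,
        MvPolynomial.coeff_smul, MvPolynomial.coeff_sum] at hs
      obtain ⟨k, hk, hk'⟩ := Finset.exists_ne_zero_of_sum_ne_zero (right_ne_zero_of_smul hs)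
      have h1 := J0LE_pperp _ k.succPNat _ (ih (n - k) (by omega) d f hf) s
        (right_ne_zero_of_smul hk')
      simp only [Finset.mem_range] at hk
      rw [Nat.cast_sub (by omega)] at h1
      simp only [Nat.succPNat_coe, Nat.succ_eq_add_one] at h1
      push_cast at h1 ⊢
      linarith

theorem J0_vanish (a b : F) (m n M : ℕ) (f : MvPolynomial ℕ+ F) (hf : wdeg f ≤ M)
    (h : M < m + n) : QstarOp a m (QstarOp b n f) = 0 := by
  have h0 : J0LE M f := by
    intro s hs
    have := MvPolynomial.le_weightedTotalDegree (fun m : ℕ+ => (m : ℕ))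
      (MvPolynomial.mem_support_iff.2 hs)
    exact_mod_cast this.trans hf
  have h1 := J0LE_Qstar a m _ _ (J0LE_Qstar b n _ _ h0)
  ext s
  by_contra hs
  have := h1 s (by simpa using hs)
  omega

theorem J0_reindex {A : Type*} [AddCommMonoid A] (M : ℕ) (G : ℕ → ℕ → ℕ → A)
    (hG : ∀ m n j, j ≤ m → j ≤ n → M + j < m + n → G m n j = 0) :
    ∑ m ∈ Finset.range (M + 1), ∑ n ∈ Finset.range (M + 1), ∑ j ∈ Finset.range (n + 1),
      (if j ≤ m then G m n j else 0) =
    ∑ N ∈ Finset.range (M + 1), ∑ m ∈ Finset.range (N + 1), ∑ m' ∈ Finset.range (N + 1),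
      (if m' ≤ m then G m (N - m') (m - m') else 0) := by
  have e1 : ∑ m ∈ Finset.range (M + 1), ∑ n ∈ Finset.range (M + 1), ∑ j ∈ Finset.range (n + 1),
      (if j ≤ m then G m n j else 0) =
      ∑ x ∈ ((Finset.range (M + 1) ×ˢ Finset.range (M + 1)) ×ˢ Finset.range (M + 1)).filter
        (fun x => x.2 ≤ x.1.1 ∧ x.2 ≤ x.1.2 ∧ x.1.1 + x.1.2 ≤ M + x.2), G x.1.1 x.1.2 x.2 := by
    rw [Finset.sum_filter, Finset.sum_product, Finset.sum_product]
    refine Finset.sum_congr rfl fun m _ => Finset.sum_congr rfl fun n hn => ?_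
    simp only [Finset.mem_range] at hn
    apply Finset.sum_subset_zero_on_sdiff
    · intro x; simp only [Finset.mem_range]; omega
    · intro x hx
      simp only [Finset.mem_sdiff, Finset.mem_range] at hx
      rw [if_neg (by dsimp only; omega)]
    · intro x hx
      simp only [Finset.mem_range] at hx
      dsimp only
      by_cases h1 : x ≤ m
      · rw [if_pos h1]
        by_cases h2 : m + n ≤ M + x
        · rw [if_pos ⟨h1, by omega, h2⟩]
        · rw [if_neg (by omega), hG m n x h1 (by omega) (by omega)]
      · rw [if_neg h1, if_neg (by omega)]
  have e2 : ∑ N ∈ Finset.range (M + 1), ∑ m ∈ Finset.range (N + 1), ∑ m' ∈ Finset.range (N + 1),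
      (if m' ≤ m then G m (N - m') (m - m') else 0) =
      ∑ x ∈ ((Finset.range (M + 1) ×ˢ Finset.range (M + 1)) ×ˢ Finset.range (M + 1)).filter
        (fun x => x.1.2 ≤ x.1.1 ∧ x.2 ≤ x.1.2), G x.1.2 (x.1.1 - x.2) (x.1.2 - x.2) := by
    rw [Finset.sum_filter, Finset.sum_product, Finset.sum_product]
    refine Finset.sum_congr rfl fun N hN => ?_
    simp only [Finset.mem_range] at hN
    apply Finset.sum_subset_zero_on_sdiff
    · intro x; simp only [Finset.mem_range]; omega
    · intro x hx
      simp only [Finset.mem_sdiff, Finset.mem_range] at hx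
      refine Finset.sum_eq_zero fun y _ => ?_
      rw [if_neg (by dsimp only; omega)]
    · intro x hx
      simp only [Finset.mem_range] at hx
      apply Finset.sum_subset_zero_on_sdiff
      · intro x; simp only [Finset.mem_range]; omega
      · intro y hy
        simp only [Finset.mem_sdiff, Finset.mem_range] at hy
        rw [if_neg (by dsimp only; omega)]
      · intro y hy
        dsimp only
        by_cases h1 : y ≤ x
        · rw [if_pos h1, if_pos ⟨by omega, h1⟩]
        · rw [if_neg h1, if_neg (by omega)]
  rw [e1, e2]
  refine Finset.sum_nbij' (fun x => ((x.1.1 + x.1.2 - x.2, x.1.1), x.1.1 - x.2))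
    (fun x => ((x.1.2, x.1.1 - x.2), x.1.2 - x.2)) ?_ ?_ ?_ ?_ ?_
  · rintro ⟨⟨m, n⟩, j⟩ h
    simp only [Finset.mem_filter, Finset.mem_product, Finset.mem_range] at h ⊢
    omega
  · rintro ⟨⟨m, n⟩, j⟩ h
    simp only [Finset.mem_filter, Finset.mem_product, Finset.mem_range] at h ⊢
    omega
  · rintro ⟨⟨m, n⟩, j⟩ h
    simp only [Finset.mem_filter, Finset.mem_product, Finset.mem_range] at h
    refine Prod.ext (Prod.ext ?_ ?_) ?_ <;> dsimp only <;> omega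
  · rintro ⟨⟨m, n⟩, j⟩ h
    simp only [Finset.mem_filter, Finset.mem_product, Finset.mem_range] at h
    refine Prod.ext (Prod.ext ?_ ?_) ?_ <;> dsimp only <;> omega
  · rintro ⟨⟨m, n⟩, j⟩ h
    simp only [Finset.mem_filter, Finset.mem_product, Finset.mem_range] at h
    dsimp only
    congr 1 <;> omega

/-- difference of the two expansions of the normal-ordering factor -/
noncomputable def J0delta (q t : F) (m m' : ℕ) : F :=
  (if m' ≤ m then J0phi q t⁻¹ (m - m') else 0) - (if m ≤ m' then J0phi q⁻¹ t (m' - m) else 0)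

theorem J0delta_le (q t : F) (m d : ℕ) :
    J0delta q t m (m + d) = - ((1 - q⁻¹) * (1 - t) * ∑ j ∈ Finset.range d, (q⁻¹ * t) ^ j) := by
  unfold J0delta J0phi
  rcases Nat.eq_zero_or_pos d with rfl | h
  · simp
  · rw [if_neg (by omega), if_pos (by omega), if_neg (by omega), Nat.add_sub_cancel_left, zero_sub]

theorem J0delta_ge (q t : F) (m d : ℕ) :
    J0delta q t (m + d) m = (1 - q) * (1 - t⁻¹) * ∑ j ∈ Finset.range d, (q * t⁻¹) ^ j := by
  unfold J0delta J0phi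
  rcases Nat.eq_zero_or_pos d with rfl | h
  · simp
  · rw [if_pos (by omega), if_neg (by omega), if_neg (by omega), Nat.add_sub_cancel_left, sub_zero]

theorem J0delta_rec (q t : F) (hq : q ≠ 0) (ht : t ≠ 0) (m m' : ℕ) :
    J0delta q t m (m' + 1) - J0delta q t m m' =
      - ((1 - q) * (1 - t⁻¹)) * (q * t⁻¹) ^ ((m : ℤ) - m' - 1) := by
  have hz : q * t⁻¹ ≠ 0 := mul_ne_zero hq (inv_ne_zero ht)
  rcases Nat.lt_or_ge m' m with h | h
  · obtain ⟨d, rfl⟩ := Nat.exists_eq_add_of_le (Nat.succ_le_of_lt h)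
    have h1 : ((m'.succ + d : ℕ) : ℤ) - m' - 1 = d := by push_cast; ring
    rw [h1, zpow_natCast, Nat.succ_eq_add_one, J0delta_ge, add_assoc, J0delta_ge,
      add_comm 1 d, Finset.sum_range_succ]
    ring
  · obtain ⟨d, rfl⟩ := Nat.exists_eq_add_of_le h
    have h1 : (m : ℤ) - ((m + d : ℕ) : ℤ) - 1 = -((d + 1 : ℕ) : ℤ) := by push_cast; ring
    have h2 : (q * t⁻¹)⁻¹ = q⁻¹ * t := by rw [mul_inv, inv_inv]
    rw [h1, zpow_neg, zpow_natCast, ← inv_pow, h2, add_assoc, J0delta_le, J0delta_le,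
      Finset.sum_range_succ, pow_succ]
    field_simp
    ring

theorem J0_core {A : Type*} [CommRing A] [Algebra F A] (q t : F) (hq : q ≠ 0) (ht : t ≠ 0)
    (N : ℕ) (u w : ℕ → A)
    (hu : N ≠ 0 → ∑ m ∈ Finset.range (N + 1), t ^ (N - m) • u m = 0)
    (hw : N ≠ 0 → ∑ m ∈ Finset.range (N + 1), q ^ (N - m) • w m = 0) :
    ∑ m ∈ Finset.range (N + 1), ∑ m' ∈ Finset.range (N + 1),
      (if m' ≤ m then (q ^ ((N : ℤ) - m - m') * J0phi q t⁻¹ (m - m')) • (u m * w m') else 0) =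
    ∑ m ∈ Finset.range (N + 1), ∑ m' ∈ Finset.range (N + 1),
      (if m ≤ m' then (q ^ ((N : ℤ) - m - m') * J0phi q⁻¹ t (m' - m)) • (u m * w m') else 0) := by
  by_cases hN : N = 0
  · subst hN; simp [J0phi]
  specialize hu hN
  specialize hw hN
  rw [← sub_eq_zero, ← Finset.sum_sub_distrib]
  simp_rw [← Finset.sum_sub_distrib]
  let E : ℕ → A := fun m' => ∑ m ∈ Finset.range (N + 1), (q ^ (-(m : ℤ)) * J0delta q t m m') • u m
  have hE : ∀ m', E m' = E 0 := by
    intro m'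
    induction m' with
    | zero => rfl
    | succ m' ih =>
      rw [← ih, ← sub_eq_zero]
      simp only [E]
      rw [← Finset.sum_sub_distrib]
      have : ∀ m ∈ Finset.range (N + 1), (q ^ (-(m : ℤ)) * J0delta q t m (m' + 1)) • u m
          - (q ^ (-(m : ℤ)) * J0delta q t m m') • u m =
          (- ((1 - q) * (1 - t⁻¹)) * q ^ (-(m' : ℤ) - 1) * t ^ ((m' : ℤ) + 1 - N)) •
            (t ^ (N - m) • u m) := by
        intro m hm
        simp only [Finset.mem_range] at hm
        rw [← sub_smul, ← mul_sub, J0delta_rec q t hq ht, smul_smul]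
        congr 1
        rw [mul_zpow, inv_zpow', ← zpow_natCast t, Nat.cast_sub (by omega)]
        have e1 : q ^ (-(m' : ℤ) - 1) = q ^ (-(m : ℤ)) * q ^ ((m : ℤ) - m' - 1) := by
          rw [← zpow_add₀ hq]; congr 1; ring
        have e2 : t ^ (-((m : ℤ) - m' - 1)) = t ^ ((m' : ℤ) + 1 - N) * t ^ ((N : ℤ) - m) := by
          rw [← zpow_add₀ ht]; congr 1; ring
        rw [e1, e2]
        ring
      rw [Finset.sum_congr rfl this, ← Finset.smul_sum, hu, smul_zero]
  have hsum : ∑ m' ∈ Finset.range (N + 1), E m' * (q ^ (N - m') • w m') = 0 := by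
    rw [Finset.sum_congr rfl fun m' _ => by rw [hE m'], ← Finset.mul_sum, hw, mul_zero]
  rw [Finset.sum_comm]
  refine Eq.trans ?_ hsum
  refine Finset.sum_congr rfl fun m' hm' => ?_
  simp only [Finset.mem_range] at hm'
  simp only [E]
  rw [Finset.sum_mul]
  refine Finset.sum_congr rfl fun m _ => ?_
  rw [smul_mul_smul_comm, J0delta]
  have e1 : q ^ ((N : ℤ) - m - m') = q ^ (-(m : ℤ)) * q ^ (N - m') := by
    rw [← zpow_natCast q, Nat.cast_sub (by omega), ← zpow_add₀ hq]; congr 1; ring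
  rw [e1]
  split_ifs
  · rw [← sub_smul]; congr 1; ring
  · rw [sub_zero, sub_zero]; congr 1; ring
  · rw [zero_sub, zero_sub, ← neg_smul]; congr 1; ring
  · simp

theorem J0_combine {A : Type*} [CommRing A] [Algebra F A] (q t : F) (hq : q ≠ 0) (ht : t ≠ 0)
    (M : ℕ) (U W : ℕ → ℕ → A)
    (hU : ∀ N, N ≠ 0 → ∑ m ∈ Finset.range (N + 1), t ^ (N - m) • U m (N - m) = 0)
    (hW : ∀ N, N ≠ 0 → ∑ m ∈ Finset.range (N + 1), q ^ (N - m) • W m (N - m) = 0)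
    (hv : ∀ m n, M < m + n → W m n = 0) :
    ∑ m ∈ Finset.range (M + 1), ∑ n ∈ Finset.range (M + 1), ∑ j ∈ Finset.range (n + 1),
      (if j ≤ m then (q ^ ((n : ℤ) - m) * J0phi q t⁻¹ j) • (U m (n - j) * W (m - j) n) else 0) =
    ∑ n ∈ Finset.range (M + 1), ∑ m ∈ Finset.range (M + 1), ∑ j ∈ Finset.range (m + 1),
      (if j ≤ n then (q ^ ((n : ℤ) - m) * J0phi q⁻¹ t j) • (U (m - j) n * W m (n - j)) else 0) := by
  rw [J0_reindex M
    (fun m n j => (q ^ ((n : ℤ) - m) * J0phi q t⁻¹ j) • (U m (n - j) * W (m - j) n)),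
    J0_reindex M
    (fun n m j => (q ^ ((n : ℤ) - m) * J0phi q⁻¹ t j) • (U (m - j) n * W m (n - j)))]
  · refine Finset.sum_congr rfl fun N _ => ?_
    have hc := J0_core q t hq ht N (fun m => U m (N - m)) (fun m => W m (N - m)) (hU N) (hW N)
    refine Eq.trans ?_ (hc.trans ?_)
    · refine Finset.sum_congr rfl fun m hm => Finset.sum_congr rfl fun m' hm' => ?_
      simp only [Finset.mem_range] at hm hm'
      split_ifs with h
      · have e1 : N - m' - (m - m') = N - m := by omega
        have e2 : m - (m - m') = m' := by omega
        have e3 : ((N - m' : ℕ) : ℤ) - m = (N : ℤ) - m - m' := by omega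
        rw [e1, e2, e3]
      · rfl
    · rw [← Finset.sum_range_reflect]
      refine Finset.sum_congr rfl fun m hm => ?_
      rw [← Finset.sum_range_reflect]
      refine Finset.sum_congr rfl fun m' hm' => ?_
      simp only [Finset.mem_range] at hm hm'
      by_cases h : m' ≤ m
      · rw [if_pos h, if_pos (by omega)]
        have e1 : N - (N + 1 - 1 - m) = m := by omega
        have e2 : N - (N + 1 - 1 - m') = m' := by omega
        have e3 : N - m' - (m - m') = N + 1 - 1 - m := by omega
        have e4 : m - (m - m') = m' := by omega
        have e5 : N + 1 - 1 - m' - (N + 1 - 1 - m) = m - m' := by omega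
        have e6 : (N : ℤ) - ((N + 1 - 1 - m : ℕ) : ℤ) - ((N + 1 - 1 - m' : ℕ) : ℤ)
          = (m : ℤ) - ((N - m' : ℕ) : ℤ) := by omega
        have e7 : N + 1 - 1 - m' = N - m' := by omega
        rw [e1, e2, e3, e4, e5, e6, e7]
      · rw [if_neg h, if_neg (by omega)]
  · intro n m j h1 h2 h3
    rw [hv _ _ (by omega), mul_zero, smul_zero]
  · intro m n j h1 h2 h3
    rw [hv _ _ (by omega), mul_zero, smul_zero]

theorem J0_kappa (q : F) (hq : q ≠ 0) (m n : ℕ) :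
    q ^ (-(m : ℤ)) * (q⁻¹) ^ (-(n : ℤ)) = q ^ ((n : ℤ) - m) := by
  rw [inv_zpow', neg_neg, ← zpow_add₀ hq]; congr 1; ring

theorem J0_Jop_apply (q t : F) (M : ℕ) (f : MvPolynomial ℕ+ F) :
    Jop q t M f = ∑ n ∈ Finset.range (M + 1),
      (q ^ (-(n : ℤ))) • (Qcoef t n * QstarOp q n f) := by
  simp [Jop, mulOp, LinearMap.sum_apply]

theorem J0_Jop_Jop (q t q' t' : F) (M : ℕ) (f : MvPolynomial ℕ+ F) :
    Jop q t M (Jop q' t' M f) =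
      ∑ m ∈ Finset.range (M + 1), ∑ n ∈ Finset.range (M + 1), ∑ j ∈ Finset.range (n + 1),
      (if j ≤ m then (q ^ (-(m : ℤ)) * q' ^ (-(n : ℤ)) * J0phi q t' j) •
        (Qcoef t m * Qcoef t' (n - j) * QstarOp q (m - j) (QstarOp q' n f)) else 0) := by
  rw [J0_Jop_apply]
  refine Finset.sum_congr rfl fun m _ => ?_
  rw [J0_Jop_apply, map_sum, Finset.mul_sum, Finset.smul_sum]
  refine Finset.sum_congr rfl fun n _ => ?_
  rw [map_smul, J0_normal, Finset.smul_sum, Finset.mul_sum, Finset.smul_sum]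
  refine Finset.sum_congr rfl fun j _ => ?_
  split_ifs
  · simp only [MvPolynomial.smul_eq_C_mul, map_mul]
    ring
  · simp

end J0Helpers

/-- `[J₀^{[1]}, J₀^{[-1]}] = 0` on `Λ`.  Since each term of
`1 + J₀^{[s]}` with `n` larger than the weighted degree annihilates a given
symmetric function, and the operators preserve the weighted degree, the claim is
that the truncations commute on every `f` whose weighted degree is at most `M`
(and `[1 + J₀^{[1]}, 1 + J₀^{[-1]}] = [J₀^{[1]}, J₀^{[-1]}]`). -/
theorem J0_commute (q t : F) (hq : q ≠ 0) (ht : t ≠ 0) :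
    ∀ f : MvPolynomial ℕ+ F, ∀ M : ℕ, wdeg f ≤ M →
      Jop q t M (Jop q⁻¹ t⁻¹ M f) = Jop q⁻¹ t⁻¹ M (Jop q t M f) := by

  intro f M hf
  have h := J0_combine q t hq ht M (fun m n => Qcoef t m * Qcoef t⁻¹ n)
    (fun m n => QstarOp q m (QstarOp q⁻¹ n f))
    (fun N hN => by simpa only [MvPolynomial.smul_eq_C_mul] using J0_QR_coeff t ht N hN)
    (fun N hN => by simpa only [MvPolynomial.smul_eq_C_mul] using J0_QsRs q hq N hN f)
    (fun m n hmn => J0_vanish q q⁻¹ m n M f hf hmn)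
  rw [J0_Jop_Jop, J0_Jop_Jop]
  refine Eq.trans ?_ (h.trans ?_)
  · simp only [J0_kappa q hq]
  · refine Finset.sum_congr rfl fun n _ => Finset.sum_congr rfl fun m _ =>
      Finset.sum_congr rfl fun j _ => ?_
    rw [J0_Qstar_comm, mul_comm (_ ^ _) (q ^ _), J0_kappa q hq, mul_comm (Qcoef t⁻¹ _)]
end
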